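/- Let A be a real m×n matrix (m ≥ 1) all of whose rows are nonzero, let x* ∈ ℝ^n with A x* = b, and let σ > 0 satisfy ‖A u‖₂ ≥ σ‖u‖₂ for all u in the range of Aᵀ. Let x ∈ ℝ^n satisfy x − x* ∈ range(Aᵀ) and b − Ax ≠ 0, and let S ⊆ {1,…,m} satisfy b^{(i)} − A^{(i)}x = 0 for all i ∈ S. Fix p ∈ [1,∞) and η ∈ (0,1], set ε = η · max_{1≤i≤m} |b^{(i)} − A^{(i)}x|^p / ‖A^{(i)}‖_p^p, τ = { i : |b^{(i)} − A^{(i)}x|^p ≥ ε‖A^{(i)}‖_p^p }, and ξ = Σ_{i∈τ} (b^{(i)} − A^{(i)}x) e_i. Then Aᵀξ ≠ 0 and (ξᵀ(b − Ax))² / ‖Aᵀξ‖₂² ≥ β σ² ‖x − x*‖₂², where β = (η^{2/p} / Σ_{i∈{1,…,m}∖S} ‖A^{(i)}‖_p²) · (Σ_{i∈τ} ‖A^{(i)}‖_p²) / ‖A_τ‖², and ‖A_τ‖ is the ℓ²→ℓ² operator norm (largest singular value) of the row submatrix A_τ with rows indexed by τ. -/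

import Mathlib

open Matrix Finset

/-- The ℓ²→ℓ² operator norm (largest singular value) of a real matrix. -/
noncomputable def sigmaMax {ι : Type} [Fintype ι] {n : ℕ}
    (M : Matrix ι (Fin n) ℝ) : ℝ :=
  ‖LinearMap.toContinuousLinearMap (Matrix.toEuclideanLin M)‖

/-- The row submatrix of `A` consisting of the rows indexed by `τ`. -/
def rowSubmatrix {m n : ℕ} (A : Matrix (Fin m) (Fin n) ℝ) (τ : Finset (Fin m)) :
    Matrix {i : Fin m // i ∈ τ} (Fin n) ℝ := fun i j => A i.1 j

/-!
Let `r = b - A x`, let `M` be the largest `|rᵢ|ᵖ / ‖Aᵢ‖ₚᵖ`, and write `Wᵢ = ‖Aᵢ‖ₚ²`. Raising the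
threshold conditions to the power `2 / p` gives `rᵢ² ≤ M^(2/p) Wᵢ` for every `i` and
`(η M)^(2/p) Wᵢ ≤ rᵢ²` on `τ`. As `r` vanishes on `S`, the first bound summed over `Sᶜ` gives
`σ² ‖x - x*‖² ≤ ‖r‖² ≤ M^(2/p) ∑_{Sᶜ} Wᵢ`. The second one, summed over `τ`, bounds
`‖r_τ‖² = ξᵀ r` from below, and `‖Aᵀ ξ‖ = ‖A_τᵀ r_τ‖ ≤ ‖A_τ‖ ‖r_τ‖` gives
`(ξᵀ r)² / ‖Aᵀ ξ‖² ≥ ‖r_τ‖² / ‖A_τ‖²`. Eliminating `M` yields the bound. The maximizing index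
lies in `τ`, so `r_τ ≠ 0`, and `Aᵀ ξ ≠ 0` because `r` is in the range of `A`.
-/

lemma transpose_mulVec_ne_zero_of_dotProduct_mulVec_ne_zero {ι κ R : Type*} [Fintype ι]
    [Fintype κ] [CommSemiring R] {A : Matrix ι κ R} {v : ι → R} {u : κ → R} (h : v ⬝ᵥ A *ᵥ u ≠ 0) :
    Aᵀ *ᵥ v ≠ 0 := by
  intro hv
  rw [dotProduct_mulVec, ← mulVec_transpose, hv, zero_dotProduct] at h
  exact h rfl

section Restriction

variable {ι κ R : Type*} [DecidableEq ι] [CommSemiring R]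

/-- The vector that agrees with `v` on `τ` and vanishes off `τ`; for the residual `v = b - A x`
it is the coefficient vector `ξ` of the projection step. It is written as a sum of standard basis
vectors, as `ξ` is, rather than as a `Finset.piecewise`. -/
def restrictTo (τ : Finset ι) (v : ι → R) : ι → R :=
  ∑ i ∈ τ, v i • Pi.single i 1

variable [Fintype ι]

lemma restrictTo_dotProduct (τ : Finset ι) (v u : ι → R) :
    restrictTo τ v ⬝ᵥ u = ∑ i ∈ τ, v i * u i := by
  simp only [restrictTo, sum_dotProduct, smul_dotProduct, single_one_dotProduct, smul_eq_mul]

lemma transpose_mulVec_restrictTo (A : Matrix ι κ R) (τ : Finset ι) (v : ι → R) :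
    Aᵀ *ᵥ restrictTo τ v = (A.submatrix ((↑) : τ → ι) id)ᵀ *ᵥ fun i : τ ↦ v i := by
  ext j
  calc (Aᵀ *ᵥ restrictTo τ v) j = ∑ i ∈ τ, v i * A i j := by
        rw [mulVec, dotProduct_comm, restrictTo_dotProduct]; rfl
    _ = ∑ i : τ, A i j * v i := by simp only [← sum_coe_sort τ, mul_comm]

end Restriction

lemma transpose_mulVec_restrictTo_mulVec_ne_zero {ι κ R : Type*} [Fintype ι] [DecidableEq ι]
    [Fintype κ] [CommRing R] [LinearOrder R] [IsStrictOrderedRing R] (A : Matrix ι κ R)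
    (u : κ → R) {τ : Finset ι} (h : ∃ i ∈ τ, (A *ᵥ u) i ≠ 0) :
    Aᵀ *ᵥ restrictTo τ (A *ᵥ u) ≠ 0 := by
  obtain ⟨k, hkτ, hk⟩ := h
  refine transpose_mulVec_ne_zero_of_dotProduct_mulVec_ne_zero (u := u) ?_
  rw [restrictTo_dotProduct]
  exact (sum_pos' (fun i _ ↦ mul_self_nonneg _) ⟨k, hkτ, mul_self_pos.2 hk⟩).ne'

lemma exists_pos_and_mul_sup'_div_mul_le {ι 𝕜 : Type*} [Field 𝕜] [LinearOrder 𝕜]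
    [IsStrictOrderedRing 𝕜] {s : Finset ι} (hs : s.Nonempty) {a w : ι → 𝕜}
    (hw : ∀ i ∈ s, 0 < w i) (ha : ∃ i ∈ s, 0 < a i) {η : 𝕜} (hη : η ≤ 1) :
    ∃ k ∈ s, 0 < a k ∧ η * s.sup' hs (fun i ↦ a i / w i) * w k ≤ a k := by
  obtain ⟨k, hks, hk⟩ := exists_mem_eq_sup' hs fun i ↦ a i / w i
  obtain ⟨i, his, hi⟩ := ha
  have hpos : 0 < a k / w k :=
    hk ▸ (div_pos hi (hw i his)).trans_le (le_sup' (fun i ↦ a i / w i) his)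
  refine ⟨k, hks, (div_pos_iff_of_pos_right (hw k hks)).1 hpos, ?_⟩
  rw [hk, ← le_div_iff₀ (hw k hks)]
  exact mul_le_of_le_one_left hpos.le hη

lemma abs_rpow_rpow_two_div {p : ℝ} (hp : p ≠ 0) (a : ℝ) : (|a| ^ p) ^ (2 / p) = a ^ 2 := by
  rw [← Real.rpow_mul (abs_nonneg a), mul_div_cancel₀ _ hp, Real.rpow_two, sq_abs]

lemma sq_le_rpow_two_div_mul {p a c w : ℝ} (hp : 0 < p) (hc : 0 ≤ c) (hw : 0 ≤ w)
    (h : |a| ^ p ≤ c * w) : a ^ 2 ≤ c ^ (2 / p) * w ^ (2 / p) := by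
  rw [← abs_rpow_rpow_two_div hp.ne', ← Real.mul_rpow hc hw]
  gcongr

lemma rpow_two_div_mul_le_sq {p a c w : ℝ} (hp : 0 < p) (hc : 0 ≤ c) (hw : 0 ≤ w)
    (h : c * w ≤ |a| ^ p) : c ^ (2 / p) * w ^ (2 / p) ≤ a ^ 2 := by
  rw [← abs_rpow_rpow_two_div hp.ne', ← Real.mul_rpow hc hw]
  gcongr

lemma sum_abs_rpow_pos {κ : Type*} [Fintype κ] {v : κ → ℝ} (hv : v ≠ 0) (p : ℝ) :
    0 < ∑ j, |v j| ^ p := by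
  obtain ⟨j, hj⟩ := Function.ne_iff.1 hv
  exact sum_pos' (fun j _ ↦ by positivity) ⟨j, mem_univ j, Real.rpow_pos_of_pos (abs_pos.2 hj) p⟩

lemma sq_mul_le_of_mul_sqrt_le_sqrt {σ s t : ℝ} (hσ : 0 ≤ σ) (hs : 0 ≤ s) (ht : 0 ≤ t)
    (h : σ * √s ≤ √t) : σ ^ 2 * s ≤ t := by
  rw [← Real.sq_sqrt hs, ← Real.sq_sqrt ht, ← mul_pow]
  gcongr

section Projection

open scoped Matrix.Norms.L2Operator

variable {ι κ : Type*} [Fintype ι] [Fintype κ] [DecidableEq κ]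

lemma sum_transpose_mulVec_sq_le (B : Matrix ι κ ℝ) (v : ι → ℝ) :
    ∑ j, (Bᵀ *ᵥ v) j ^ 2 ≤ ‖B‖ ^ 2 * ∑ i, v i ^ 2 := by
  classical
  have h := pow_le_pow_left₀ (norm_nonneg _) (l2_opNorm_mulVec Bᴴ (WithLp.toLp 2 v)) 2
  rwa [mul_pow, l2_opNorm_conjTranspose, EuclideanSpace.real_norm_sq_eq,
    EuclideanSpace.real_norm_sq_eq, conjTranspose_eq_transpose_of_trivial] at h

lemma sum_sq_div_l2_opNorm_sq_le {B : Matrix ι κ ℝ} {v : ι → ℝ} (hBv : Bᵀ *ᵥ v ≠ 0) :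
    (∑ i, v i ^ 2) / ‖B‖ ^ 2 ≤ (∑ i, v i ^ 2) ^ 2 / ∑ j, (Bᵀ *ᵥ v) j ^ 2 := by
  have hV : 0 < ∑ j, (Bᵀ *ᵥ v) j ^ 2 := by
    obtain ⟨j, hj⟩ := Function.ne_iff.1 hBv
    exact sum_pos' (fun j _ ↦ sq_nonneg _) ⟨j, mem_univ j, sq_pos_of_ne_zero hj⟩
  have hle := sum_transpose_mulVec_sq_le B v
  have hv : 0 ≤ ∑ i, v i ^ 2 := by positivity
  have hB : 0 < ‖B‖ ^ 2 := pos_of_mul_pos_left (hV.trans_le hle) hv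
  rw [div_le_div_iff₀ hB hV]
  calc (∑ i, v i ^ 2) * ∑ j, (Bᵀ *ᵥ v) j ^ 2
      ≤ (∑ i, v i ^ 2) * (‖B‖ ^ 2 * ∑ i, v i ^ 2) := by gcongr
    _ = (∑ i, v i ^ 2) ^ 2 * ‖B‖ ^ 2 := by ring

variable [DecidableEq ι]

lemma sum_sq_div_l2_opNorm_submatrix_sq_le {A : Matrix ι κ ℝ} {τ : Finset ι} {r : ι → ℝ}
    (hξ : Aᵀ *ᵥ restrictTo τ r ≠ 0) :
    (∑ i ∈ τ, r i ^ 2) / ‖A.submatrix ((↑) : τ → ι) id‖ ^ 2 ≤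
      (restrictTo τ r ⬝ᵥ r) ^ 2 / ∑ j, (Aᵀ *ᵥ restrictTo τ r) j ^ 2 := by
  rw [transpose_mulVec_restrictTo] at hξ ⊢
  simp only [restrictTo_dotProduct, ← sq, ← sum_coe_sort τ fun i ↦ r i ^ 2]
  exact sum_sq_div_l2_opNorm_sq_le hξ

lemma sum_sq_le_mul_sum_compl {S : Finset ι} {r W : ι → ℝ} {M : ℝ} (hS : ∀ i ∈ S, r i = 0)
    (hM : ∀ i, r i ^ 2 ≤ M * W i) : ∑ i, r i ^ 2 ≤ M * ∑ i ∈ Sᶜ, W i := by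
  calc ∑ i, r i ^ 2 = ∑ i ∈ Sᶜ, r i ^ 2 := by
        refine (sum_subset (subset_univ _) fun i _ hi ↦ ?_).symm
        rw [hS i (by simpa using hi), zero_pow two_ne_zero]
    _ ≤ M * ∑ i ∈ Sᶜ, W i := by
        rw [mul_sum]
        exact sum_le_sum fun i _ ↦ hM i

lemma mul_le_sq_restrictTo_dotProduct_div_of_threshold {A : Matrix ι κ ℝ} {S τ : Finset ι}
    {r W : ι → ℝ} {D M θ : ℝ}
    (hD : D ≤ ∑ i, r i ^ 2) (hS : ∀ i ∈ S, r i = 0) (hW : ∀ i, 0 ≤ W i) (hM₀ : 0 ≤ M)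
    (hM : ∀ i, r i ^ 2 ≤ M * W i) (hθ : 0 ≤ θ) (hτ : ∀ i ∈ τ, θ * M * W i ≤ r i ^ 2)
    (hξ : Aᵀ *ᵥ restrictTo τ r ≠ 0) :
    θ / (∑ i ∈ Sᶜ, W i) * ((∑ i ∈ τ, W i) / ‖A.submatrix ((↑) : τ → ι) id‖ ^ 2) * D ≤
      (restrictTo τ r ⬝ᵥ r) ^ 2 / ∑ j, (Aᵀ *ᵥ restrictTo τ r) j ^ 2 := by
  set L := ‖A.submatrix ((↑) : τ → ι) id‖
  have hWS : 0 ≤ ∑ i ∈ Sᶜ, W i := sum_nonneg fun i _ ↦ hW i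
  have hWτ : 0 ≤ ∑ i ∈ τ, W i := sum_nonneg fun i _ ↦ hW i
  have hupper : D / ∑ i ∈ Sᶜ, W i ≤ M :=
    div_le_of_le_mul₀ hWS hM₀ (hD.trans (sum_sq_le_mul_sum_compl hS hM))
  have hlower : θ * M * ∑ i ∈ τ, W i ≤ ∑ i ∈ τ, r i ^ 2 := by
    rw [mul_sum]
    exact sum_le_sum hτ
  calc θ / (∑ i ∈ Sᶜ, W i) * ((∑ i ∈ τ, W i) / L ^ 2) * D
      = θ * ((∑ i ∈ τ, W i) / L ^ 2) * (D / ∑ i ∈ Sᶜ, W i) := by ring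
    _ ≤ θ * ((∑ i ∈ τ, W i) / L ^ 2) * M := by gcongr
    _ = θ * M * (∑ i ∈ τ, W i) / L ^ 2 := by ring
    _ ≤ (∑ i ∈ τ, r i ^ 2) / L ^ 2 := by gcongr
    _ ≤ _ := sum_sq_div_l2_opNorm_submatrix_sq_le hξ

/-- The weight `w i` takes the place of the `p`-th power of the `ℓᵖ` norm of the `i`-th row. -/
theorem fgbk_key_lower_bound_general [Nonempty ι] (A : Matrix ι κ ℝ) {b : ι → ℝ} {xs x : κ → ℝ}
    (hxs : A *ᵥ xs = b) {σ : ℝ}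
    (hσ : σ ^ 2 * ∑ j, (x j - xs j) ^ 2 ≤ ∑ i, (A *ᵥ (x - xs)) i ^ 2)
    (hres : b - A *ᵥ x ≠ 0) {S : Finset ι} (hS : ∀ i ∈ S, b i - (A *ᵥ x) i = 0)
    {w : ι → ℝ} (hw : ∀ i, 0 < w i) {p : ℝ} (hp : 0 < p) {η : ℝ} (hη0 : 0 < η) (hη1 : η ≤ 1)
    {τ : Finset ι}
    (hτ : ∀ i, i ∈ τ ↔ |b i - (A *ᵥ x) i| ^ p ≥
      η * univ.sup' univ_nonempty (fun i ↦ |b i - (A *ᵥ x) i| ^ p / w i) * w i) :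
    Aᵀ *ᵥ restrictTo τ (b - A *ᵥ x) ≠ 0 ∧
      (restrictTo τ (b - A *ᵥ x) ⬝ᵥ (b - A *ᵥ x)) ^ 2 /
          ∑ j, (Aᵀ *ᵥ restrictTo τ (b - A *ᵥ x)) j ^ 2 ≥
        η ^ (2 / p) / (∑ i ∈ Sᶜ, w i ^ (2 / p)) *
          ((∑ i ∈ τ, w i ^ (2 / p)) / ‖A.submatrix ((↑) : τ → ι) id‖ ^ 2) *
          σ ^ 2 * ∑ j, (x j - xs j) ^ 2 := by
  have hr : b - A *ᵥ x = A *ᵥ (xs - x) := by rw [mulVec_sub, hxs]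
  set M := univ.sup' univ_nonempty fun i ↦ |b i - (A *ᵥ x) i| ^ p / w i
  have hM (i : ι) : |b i - (A *ᵥ x) i| ^ p / w i ≤ M :=
    le_sup' (fun i ↦ |b i - (A *ᵥ x) i| ^ p / w i) (mem_univ i)
  have hM₀ : 0 ≤ M :=
    (div_nonneg (by positivity) (hw (Classical.arbitrary ι)).le).trans (hM _)
  have hne : ∃ k ∈ τ, (b - A *ᵥ x) k ≠ 0 := by
    obtain ⟨i, hi⟩ := Function.ne_iff.1 hres
    obtain ⟨k, -, hk, hkτ⟩ := exists_pos_and_mul_sup'_div_mul_le univ_nonempty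
      (a := fun i ↦ |b i - (A *ᵥ x) i| ^ p) (fun i _ ↦ hw i)
      ⟨i, mem_univ i, Real.rpow_pos_of_pos (abs_pos.2 hi) p⟩ hη1
    refine ⟨k, (hτ k).2 hkτ, fun h ↦ hk.ne' ?_⟩
    rw [Pi.sub_apply] at h
    simp only [h, abs_zero, Real.zero_rpow hp.ne']
  have hξ : Aᵀ *ᵥ restrictTo τ (b - A *ᵥ x) ≠ 0 := by
    rw [hr] at hne ⊢
    exact transpose_mulVec_restrictTo_mulVec_ne_zero A _ hne
  refine ⟨hξ, ?_⟩
  rw [ge_iff_le, mul_assoc _ (σ ^ 2)]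
  refine mul_le_sq_restrictTo_dotProduct_div_of_threshold (M := M ^ (2 / p)) ?_ hS
    (fun i ↦ Real.rpow_nonneg (hw i).le _) (by positivity)
    (fun i ↦ sq_le_rpow_two_div_mul hp hM₀ (hw i).le ((div_le_iff₀ (hw i)).1 (hM i)))
    (by positivity) (fun i hi ↦ ?_) hξ
  · simpa only [hr, ← neg_sub xs x, mulVec_neg, Pi.neg_apply, neg_sq] using hσ
  · rw [← Real.mul_rpow hη0.le hM₀]
    exact rpow_two_div_mul_le_sq hp (by positivity) (hw i).le ((hτ i).1 hi)

end Projection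

/-- Combined key lower bound (2.14) on the per-step projection magnitude used
in the proof of Theorem 2.1: `Aᵀξ ≠ 0` and
`(ξᵀ(b − Ax))² / ‖Aᵀξ‖₂² ≥ β σ² ‖x − x*‖₂²` with
`β = (η^{2/p} / Σ_{i∉S} ‖A⁽ⁱ⁾‖_p²) · (Σ_{i∈τ} ‖A⁽ⁱ⁾‖_p²) / ‖A_τ‖²`. -/
theorem fgbk_key_lower_bound {m n : ℕ} (hm : 0 < m)
    (A : Matrix (Fin m) (Fin n) ℝ) (hA : ∀ i, A i ≠ 0)
    (b : Fin m → ℝ) (xs : Fin n → ℝ) (hxs : A.mulVec xs = b)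
    (σ : ℝ) (hσ0 : 0 < σ)
    (hσ : ∀ u : Fin n → ℝ, (∃ y : Fin m → ℝ, u = A.transpose.mulVec y) →
      σ * Real.sqrt (∑ j, (u j) ^ 2) ≤ Real.sqrt (∑ i, (A.mulVec u i) ^ 2))
    (x : Fin n → ℝ) (hx : ∃ y : Fin m → ℝ, x - xs = A.transpose.mulVec y)
    (hres : b - A.mulVec x ≠ 0)
    (S : Finset (Fin m)) (hS : ∀ i ∈ S, b i - A.mulVec x i = 0)
    (p : ℝ) (hp : 1 ≤ p) (η : ℝ) (hη0 : 0 < η) (hη1 : η ≤ 1)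
    (ε : ℝ)
    (hε : ε = η * Finset.univ.sup' ⟨⟨0, hm⟩, Finset.mem_univ _⟩
      (fun i => |b i - A.mulVec x i| ^ p / ∑ j, |A i j| ^ p))
    (τ : Finset (Fin m))
    (hτ : ∀ i, i ∈ τ ↔ |b i - A.mulVec x i| ^ p ≥ ε * ∑ j, |A i j| ^ p)
    (ξ : Fin m → ℝ)
    (hξ : ξ = ∑ i ∈ τ, (b i - A.mulVec x i) • (Pi.single i 1 : Fin m → ℝ))
    (β : ℝ)
    (hβ : β = η ^ (2 / p) / (∑ i ∈ Sᶜ, (∑ j, |A i j| ^ p) ^ (2 / p)) *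
      ((∑ i ∈ τ, (∑ j, |A i j| ^ p) ^ (2 / p)) / (sigmaMax (rowSubmatrix A τ)) ^ 2)) :
    A.transpose.mulVec ξ ≠ 0 ∧
      (ξ ⬝ᵥ (b - A.mulVec x)) ^ 2 / (∑ j, (A.transpose.mulVec ξ j) ^ 2) ≥
        β * σ ^ 2 * ∑ j, (x j - xs j) ^ 2 := by
  subst hε hξ hβ
  have : Nonempty (Fin m) := ⟨⟨0, hm⟩⟩
  -- `sigmaMax (rowSubmatrix A τ)` unfolds to the `ℓ²` operator norm of `A.submatrix (↑) id`.
  exact fgbk_key_lower_bound_general A hxs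
    (sq_mul_le_of_mul_sqrt_le_sqrt hσ0.le (by positivity) (by positivity) (hσ _ hx)) hres hS
    (fun i ↦ sum_abs_rpow_pos (hA i) p) (by positivity) hη0 hη1 hτ
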